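/- arXiv:2411.01085 — 4 statements merged into one kernel-verified Lean document; each statement's English description precedes it below -/
import Mathlib

section
/- For every natural number n ≥ 1 and every ℂ-linear map d from the matrix algebra M_n(ℂ) to itself satisfying the Leibniz rule d(ab) = d(a)·b + a·d(b) for all a, b ∈ M_n(ℂ), there exists a matrix D ∈ M_n(ℂ) such that d(a) = D·a − a·D for all a ∈ M_n(ℂ). -/
/-! With `e i j` the matrix units and `o` a fixed index, the witness is `D = ∑ i, d (e i o) * e o i`.
The sum `∑ i, d (a * e i o) * e o i` equals `d a + a * D` by the Leibniz rule and `∑ i, e i i = 1`;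
expanding `a * e i o = ∑ k, a k i • e k o` and using linearity of `d`, it also equals `D * a`. -/

/-- Every derivation of the matrix algebra `Mₙ(ℂ)` (n ≥ 1) is inner:
it is given by the commutator with some matrix `D`. -/
theorem stmt_0 (n : ℕ) (hn : 1 ≤ n)
    (d : Matrix (Fin n) (Fin n) ℂ →ₗ[ℂ] Matrix (Fin n) (Fin n) ℂ)
    (hLeibniz : ∀ a b : Matrix (Fin n) (Fin n) ℂ, d (a * b) = d a * b + a * d b) :
    ∃ D : Matrix (Fin n) (Fin n) ℂ, ∀ a : Matrix (Fin n) (Fin n) ℂ,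
      d a = D * a - a * D := by
  let o : Fin n := ⟨0, hn⟩
  let e : Fin n → Fin n → Matrix (Fin n) (Fin n) ℂ := fun i j => Matrix.single i j 1
  refine ⟨∑ i, d (e i o) * e o i, fun a => ?_⟩
  have hcol : ∀ i, a * e i o = ∑ k, a k i • e k o := by
    intro i
    ext p q
    simp [e, Matrix.mul_apply, Matrix.sum_apply, Matrix.single_apply, ite_and]
  have hrow : ∀ k, e o k * a = ∑ i, a k i • e o i := by
    intro k
    ext p q
    simp [e, Matrix.mul_apply, Matrix.sum_apply, Matrix.single_apply, ite_and]
  have hone : ∑ i, e i o * e o i = 1 := by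
    simp [e, Matrix.sum_single_one]
  have hleft : ∑ i, d (a * e i o) * e o i = d a + a * ∑ i, d (e i o) * e o i := by
    simp_rw [hLeibniz, add_mul, mul_assoc, Finset.sum_add_distrib, ← Finset.mul_sum, hone, mul_one]
  have hright : ∑ i, d (a * e i o) * e o i = (∑ i, d (e i o) * e o i) * a := by
    simp_rw [hcol, map_sum, map_smul, Finset.sum_mul, mul_assoc, hrow, Finset.mul_sum,
      smul_mul_assoc, mul_smul_comm]
    exact Finset.sum_comm
  rw [← hright, hleft, add_sub_cancel_right]
end

section
/- Let n ≥ 1 and let d : M_n(ℂ) → M_n(ℂ) be a ℂ-linear map satisfying the Leibniz rule d(ab) = d(a)·b + a·d(b) for all a, b, and satisfying d(aᴴ) = −(d(a))ᴴ for all a, where aᴴ denotes the conjugate transpose. Then there exists a Hermitian matrix D ∈ M_n(ℂ) (i.e. Dᴴ = D) such that d(a) = D·a − a·D for all a ∈ M_n(ℂ). -/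
open Matrix

/-!
Every derivation `d` of `Mₙ(ℂ)` is inner: with matrix units `e i j` and a fixed index `z`, put
`B = ∑ k, d (e k z) * e z k`. Expanding `∑ k, d (a * e k z) * e z k` by the Leibniz rule gives
`d a + a * B`, because `∑ k, e k k = 1`; expanding `a * e k z = ∑ i, a i k • e i z` by linearity
gives `B * a`. Hence `d a = B * a - a * B`. Compatibility with the involution shows that `Bᴴ`
implements `d` as well, so the Hermitian matrix `(B + Bᴴ) / 2` does too.
-/

lemma mul_single_eq_sum {n : ℕ} (a : Matrix (Fin n) (Fin n) ℂ) (k z : Fin n) :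
    a * single k z 1 = ∑ i, a i k • single i z (1 : ℂ) := by
  ext p q
  by_cases h : z = q <;> simp [Matrix.mul_apply, Matrix.sum_apply, single_apply, h]

lemma single_mul_eq_sum {n : ℕ} (a : Matrix (Fin n) (Fin n) ℂ) (i z : Fin n) :
    single z i 1 * a = ∑ k, a i k • single z k (1 : ℂ) := by
  ext p q
  by_cases h : z = p <;> simp [Matrix.mul_apply, Matrix.sum_apply, single_apply, h]

lemma exists_eq_commutator {n : ℕ} (z : Fin n)
    (d : Matrix (Fin n) (Fin n) ℂ →ₗ[ℂ] Matrix (Fin n) (Fin n) ℂ)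
    (hLeibniz : ∀ a b : Matrix (Fin n) (Fin n) ℂ, d (a * b) = d a * b + a * d b) :
    ∃ B : Matrix (Fin n) (Fin n) ℂ, ∀ a, d a = B * a - a * B := by
  refine ⟨∑ k, d (single k z 1) * single z k 1, fun a => ?_⟩
  have h1 : ∑ k, d (a * single k z 1) * single z k 1
      = d a + a * ∑ k, d (single k z 1) * single z k 1 := by
    simp only [hLeibniz, add_mul, Finset.sum_add_distrib, mul_assoc, single_mul_single_same,
      mul_one, ← Finset.mul_sum, sum_single_one]
  have h2 : ∑ k, d (a * single k z 1) * single z k 1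
      = (∑ k, d (single k z 1) * single z k 1) * a := by
    simp only [mul_single_eq_sum a, Finset.sum_mul, mul_assoc]
    simp only [single_mul_eq_sum a, map_sum, map_smul, Finset.sum_mul, Finset.mul_sum,
      smul_mul_assoc, mul_smul_comm]
    exact Finset.sum_comm
  rw [← h2, h1, add_sub_cancel_right]

/-- A derivation of `Mₙ(ℂ)` (n ≥ 1) compatible with the conjugate-transpose
involution (`d(aᴴ) = -(d a)ᴴ`) is the commutator with a Hermitian matrix `D`. -/
theorem stmt_1 (n : ℕ) (hn : 1 ≤ n)
    (d : Matrix (Fin n) (Fin n) ℂ →ₗ[ℂ] Matrix (Fin n) (Fin n) ℂ)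
    (hLeibniz : ∀ a b : Matrix (Fin n) (Fin n) ℂ, d (a * b) = d a * b + a * d b)
    (hStar : ∀ a : Matrix (Fin n) (Fin n) ℂ, d aᴴ = -(d a)ᴴ) :
    ∃ D : Matrix (Fin n) (Fin n) ℂ, Dᴴ = D ∧
      ∀ a : Matrix (Fin n) (Fin n) ℂ, d a = D * a - a * D := by
  obtain ⟨B, hB⟩ := exists_eq_commutator ⟨0, hn⟩ d hLeibniz
  have hB' : ∀ a, d a = Bᴴ * a - a * Bᴴ := fun a => by
    have h := hStar aᴴ
    rw [conjTranspose_conjTranspose, hB aᴴ] at h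
    simpa using h
  refine ⟨(1 / 2 : ℂ) • (B + Bᴴ), ?_, fun a => ?_⟩
  · simp [conjTranspose_smul, add_comm]
  · have h : d a = (1 / 2 : ℂ) • (d a + d a) := by
      rw [← two_smul ℂ (d a), smul_smul]; norm_num
    rw [h]
    nth_rewrite 1 [hB a]
    rw [hB' a, smul_mul_assoc, mul_smul_comm, ← smul_sub]
    congr 1
    noncomm_ring
end

section
/- Let A be a unital complex normed ring (e.g. a C*-algebra) and let p ∈ A satisfy p² = p and ‖p‖ ≤ 1. Then for all D, a ∈ A, ‖p(Da − aD)p − ((pDp)(pap) − (pap)(pDp))‖ ≤ 2·‖Dp − pD‖·‖a‖. -/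
/-- Quantitative estimate: in a unital complex normed ring, for an idempotent `p` of
norm at most 1, the defect between the compression of the derivation `[D,·]` and the
compressed derivation `[pDp,·]` is controlled by `2‖[D,p]‖‖a‖`. -/
theorem stmt_4 {A : Type*} [NormedRing A] [NormedAlgebra ℂ A]
    (p : A) (hp : p * p = p) (hpn : ‖p‖ ≤ 1) :
    ∀ D a : A,
      ‖p * (D * a - a * D) * p - ((p * D * p) * (p * a * p) - (p * a * p) * (p * D * p))‖ ≤
        2 * ‖D * p - p * D‖ * ‖a‖ := by
  intro D a
  have hpp : ∀ x : A, p * (p * x) = p * x := fun x => by rw [← mul_assoc, hp]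
  -- With `c = [D,p]`, idempotency gives `pD(1-p) = -pc` and `(1-p)Dp = cp`,
  -- so the defect `pD(1-p)ap - pa(1-p)Dp` is `-p(ca + ac)p`.
  have key : p * (D * a - a * D) * p
        - ((p * D * p) * (p * a * p) - (p * a * p) * (p * D * p))
      = -(p * ((D * p - p * D) * a + a * (D * p - p * D)) * p) := by
    simp only [mul_sub, sub_mul, mul_add, add_mul, mul_assoc, hpp, hp]
    abel
  have compress : ∀ x : A, ‖p * x * p‖ ≤ ‖x‖ := fun x =>
    calc ‖p * x * p‖ ≤ ‖p‖ * ‖x‖ * ‖p‖ := norm_mul₃_le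
      _ ≤ 1 * ‖x‖ * 1 := by gcongr
      _ = ‖x‖ := by ring
  rw [key, norm_neg]
  refine (compress _).trans ((norm_add_le _ _).trans ?_)
  linarith [norm_mul_le (D * p - p * D) a, norm_mul_le a (D * p - p * D),
    mul_comm ‖a‖ ‖D * p - p * D‖]
end

section
/- Let H be a nontrivial complex Hilbert space, let A and Aₙ (n ∈ ℕ) be bounded self-adjoint operators on H, and let (aₙ) and (bₙ) be sequences of nonnegative real numbers converging to 0 such that ‖(A − Aₙ)f‖ ≤ aₙ‖f‖ + bₙ‖Af‖ for all f ∈ H and all n. Then the Hausdorff distance between the spectrum of Aₙ and the spectrum of A (as compact subsets of ℂ) tends to 0 as n → ∞. -/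
/-!
The relative bound gives `‖A - Aₙ‖ ≤ aₙ + bₙ‖A‖ → 0`, so the convergence is in operator norm.
For normal (in particular self-adjoint) operators the spectrum is `1`-Lipschitz in the
Hausdorff distance
(`infDist_spectrum_le`): if `dist(x, σ(S)) > ‖S - T‖`, the functional calculus gives
`‖(x - S)⁻¹‖ ≤ 1 / dist(x, σ(S))`, so a Neumann series shows that
`x - T = (x - S)(1 + (x - S)⁻¹(S - T))` is invertible and `x` lies outside `σ(T)`.
-/

open Filter

theorem infDist_spectrum_le {E : Type*} [CStarAlgebra E] [Nontrivial E] {S T : E}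
    (hS : IsStarNormal S) {x : ℂ} (hx : x ∈ spectrum ℂ T) :
    Metric.infDist x (spectrum ℂ S) ≤ ‖S - T‖ := by
  by_contra! hlt
  set d := Metric.infDist x (spectrum ℂ S) with hd
  have hdpos : 0 < d := (norm_nonneg _).trans_lt hlt
  have hdist : ∀ z ∈ spectrum ℂ S, d ≤ ‖x - z‖ := fun z hz => by
    rw [← dist_eq_norm]
    exact Metric.infDist_le_dist_of_mem hz
  have hne : ∀ z ∈ spectrum ℂ S, x - z ≠ 0 := fun z hz =>
    norm_pos_iff.mp (hdpos.trans_le (hdist z hz))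
  have hcont : ContinuousOn (fun z : ℂ => (x - z)⁻¹) (spectrum ℂ S) :=
    ContinuousOn.inv₀ (by fun_prop) hne
  set w : E := cfc (fun z : ℂ => (x - z)⁻¹) S with hw
  have hwnorm : ‖w‖ ≤ d⁻¹ := norm_cfc_le (by positivity) fun z hz => by
    rw [norm_inv]
    exact inv_anti₀ hdpos (hdist z hz)
  have hres : cfc (fun z : ℂ => x - z) S = algebraMap ℂ E x - S := by
    rw [cfc_sub (fun _ => x) (fun z => z) S, cfc_const x S, cfc_id' ℂ S]
  have hmul : (algebraMap ℂ E x - S) * w = 1 := by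
    rw [← hres, hw, ← cfc_mul (fun z : ℂ => x - z) (fun z => (x - z)⁻¹) S (by fun_prop) hcont,
      ← cfc_one ℂ S]
    exact cfc_congr fun z hz => mul_inv_cancel₀ (hne z hz)
  have hunit : IsUnit (algebraMap ℂ E x - S) := by
    by_contra h
    exact hne x (spectrum.mem_iff.mpr h) (sub_self x)
  have hsmall : ‖w * (T - S)‖ < 1 := calc
    ‖w * (T - S)‖ ≤ ‖w‖ * ‖T - S‖ := norm_mul_le _ _
    _ ≤ d⁻¹ * ‖S - T‖ := by rw [norm_sub_rev T S]; gcongr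
    _ < d⁻¹ * d := by gcongr
    _ = 1 := inv_mul_cancel₀ hdpos.ne'
  have hfac : algebraMap ℂ E x - T = (algebraMap ℂ E x - S) * (1 - w * (T - S)) := by
    rw [mul_sub, ← mul_assoc, hmul]
    noncomm_ring
  refine spectrum.mem_iff.mp hx ?_
  rw [hfac]
  exact hunit.mul (isUnit_one_sub_of_norm_lt_one hsmall)

/-- Spectral convergence: if bounded self-adjoint operators `Aₙ` on a nontrivial
complex Hilbert space converge to a bounded self-adjoint operator `A` with relative
bounds `‖(A - Aₙ)f‖ ≤ aₙ‖f‖ + bₙ‖Af‖` given by null sequences `aₙ, bₙ ≥ 0`, then the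
Hausdorff distance between the spectra `σ(Aₙ)` and `σ(A)` tends to `0`. -/
theorem stmt_13 {H : Type*} [NormedAddCommGroup H] [InnerProductSpace ℂ H]
    [CompleteSpace H] [Nontrivial H]
    (A : H →L[ℂ] H) (An : ℕ → H →L[ℂ] H)
    (hA : IsSelfAdjoint A) (hAn : ∀ n, IsSelfAdjoint (An n))
    (a b : ℕ → ℝ) (ha0 : ∀ n, 0 ≤ a n) (hb0 : ∀ n, 0 ≤ b n)
    (ha : Tendsto a atTop (nhds 0)) (hb : Tendsto b atTop (nhds 0))
    (hbound : ∀ n, ∀ f : H, ‖(A - An n) f‖ ≤ a n * ‖f‖ + b n * ‖A f‖) :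
    Tendsto (fun n => Metric.hausdorffDist (spectrum ℂ (An n)) (spectrum ℂ A))
      atTop (nhds 0) := by
  have hnorm : ∀ n, ‖A - An n‖ ≤ a n + b n * ‖A‖ := fun n => by
    have hb := hb0 n
    have ha := ha0 n
    refine ContinuousLinearMap.opNorm_le_bound _ (by positivity) fun f => ?_
    calc ‖(A - An n) f‖ ≤ a n * ‖f‖ + b n * ‖A f‖ := hbound n f
      _ ≤ a n * ‖f‖ + b n * (‖A‖ * ‖f‖) := by gcongr; exact A.le_opNorm f
      _ = (a n + b n * ‖A‖) * ‖f‖ := by ring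
  have hlim : Tendsto (fun n => a n + b n * ‖A‖) atTop (nhds 0) := by
    simpa using ha.add (hb.mul_const ‖A‖)
  refine squeeze_zero (fun _ => Metric.hausdorffDist_nonneg) (fun n => ?_) hlim
  refine (Metric.hausdorffDist_le_of_infDist (norm_nonneg (A - An n)) (fun x hx => ?_)
    fun x hx => ?_).trans (hnorm n)
  · exact infDist_spectrum_le hA.isStarNormal hx
  · rw [norm_sub_rev]
    exact infDist_spectrum_le (hAn n).isStarNormal hx
end
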